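/- Let h ≥ 1 and α ≥ 2 be integers, let a_1, …, a_h be integers coprime to α, and let b ∈ {0, …, α−1}. Let δ be the number of tuples (y_1, …, y_h) ∈ {0, …, α−2}^h satisfying a_1y_1 + ⋯ + a_hy_h ≡ b (mod α). If a_1 + ⋯ + a_h ≡ −b (mod α), then δ = ((α−1)^h − (−1)^h)/α + (−1)^h; otherwise δ = ((α−1)^h − (−1)^h)/α. -/

import Mathlib

/-! Put `zᵢ = aᵢ (yᵢ + 1)`. As `yᵢ` runs over `{0, …, α - 2}`, `zᵢ` runs over the nonzero residues
modulo `α`, so `δ` counts the representations of `s = b + ∑ aᵢ` as an ordered sum of `h` nonzero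
elements of `ZMod α`. Let `N h s` be the number of such representations in an arbitrary abelian
group of order `n`. A family of `h` nonzero elements either has sum `s` or extends, by a unique
nonzero element, to a family of `h + 1` nonzero elements with sum `s`. Hence
`N (h + 1) s + N h s = (n - 1) ^ h`, and the formula follows by induction on `h`. -/

open Finset

section NonzeroSummands

variable {G : Type*} [AddCommGroup G] [Fintype G] [DecidableEq G]

/-- The representations of `s` as an ordered sum of `h` nonzero elements of a finite abelian group,
encoded as families indexed by `Fin h`. -/
def nonzeroSummands (h : ℕ) (s : G) : Finset (Fin h → G) :=
  {x ∈ Fintype.piFinset fun _ ↦ {0}ᶜ | ∑ i, x i = s}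

theorem mem_nonzeroSummands {h : ℕ} {s : G} {x : Fin h → G} :
    x ∈ nonzeroSummands h s ↔ (∀ i, x i ≠ 0) ∧ ∑ i, x i = s := by
  simp [nonzeroSummands]

theorem card_nonzeroSummands_zero (s : G) :
    #(nonzeroSummands 0 s) = if s = 0 then 1 else 0 := by
  simp [nonzeroSummands, filter_const, eq_comm, apply_ite card]

theorem card_nonzeroSummands_succ_eq_card_sum_ne (h : ℕ) (s : G) :
    #(nonzeroSummands (h + 1) s) =
      #{x ∈ Fintype.piFinset fun _ : Fin h ↦ ({0}ᶜ : Finset G) | ∑ i, x i ≠ s} := by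
  refine card_nbij' Fin.tail (fun x ↦ Fin.cons (s - ∑ i, x i) x) ?_ ?_ ?_ ?_
  · intro x hx
    obtain ⟨hx_ne, rfl⟩ := mem_nonzeroSummands.1 hx
    simpa [Fin.tail, Fin.sum_univ_succ] using ⟨fun i ↦ hx_ne i.succ, hx_ne 0⟩
  · intro x hx
    simp only [mem_coe, mem_filter, Fintype.mem_piFinset, mem_compl, mem_singleton] at hx
    obtain ⟨hx_ne, hx_sum⟩ := hx
    have head_ne : s - ∑ i, x i ≠ 0 := sub_ne_zero.2 hx_sum.symm
    exact mem_nonzeroSummands.2 ⟨Fin.cases head_ne hx_ne, by simp [Fin.sum_univ_succ]⟩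
  · intro x hx
    obtain ⟨-, rfl⟩ := mem_nonzeroSummands.1 hx
    have head_eq : ∑ i, x i - ∑ i, Fin.tail x i = x 0 := by simp [Fin.tail, Fin.sum_univ_succ]
    simp only [head_eq, Fin.cons_self_tail]
  · intro x _
    exact Fin.tail_cons _ _

theorem card_nonzeroSummands_succ_add (h : ℕ) (s : G) :
    #(nonzeroSummands (h + 1) s) + #(nonzeroSummands h s) = (Fintype.card G - 1) ^ h := by
  rw [card_nonzeroSummands_succ_eq_card_sum_ne, nonzeroSummands, add_comm,
    card_filter_add_card_filter_not, Fintype.card_piFinset_const, card_compl, card_singleton]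

theorem card_mul_card_nonzeroSummands_sub (h : ℕ) (s : G) :
    (Fintype.card G : ℤ) * (#(nonzeroSummands h s) - if s = 0 then (-1) ^ h else 0) =
      ((Fintype.card G : ℤ) - 1) ^ h - (-1) ^ h := by
  induction h with
  | zero => simp [card_nonzeroSummands_zero]
  | succ h ih =>
    have recurrence : (#(nonzeroSummands (h + 1) s) : ℤ) + #(nonzeroSummands h s) =
        ((Fintype.card G : ℤ) - 1) ^ h := by
      rw [← Nat.cast_pred Fintype.card_pos]
      exact_mod_cast card_nonzeroSummands_succ_add h s
    have sign_flip : (if s = 0 then (-1) ^ (h + 1) else 0 : ℤ) =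
        -if s = 0 then (-1) ^ h else 0 := by
      split_ifs <;> ring
    rw [sign_flip]
    linear_combination (Fintype.card G : ℤ) * recurrence - ih

end NonzeroSummands

section LinearCongruence

variable {n : ℕ} [NeZero n]

theorem bijOn_unit_mul_natCast_add_one (u : (ZMod n)ˣ) :
    Set.BijOn (fun y : ℕ ↦ (u : ZMod n) * (y + 1)) (range (n - 1)) {0}ᶜ := by
  refine ⟨fun y hy ↦ ?_, fun y hy z hz hyz ↦ ?_, fun z hz ↦ ?_⟩
  · have hlt : y + 1 < n := Nat.add_lt_of_lt_sub (mem_range.1 hy)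
    have hndvd : ¬ n ∣ y + 1 := Nat.not_dvd_of_pos_of_lt y.succ_pos hlt
    rw [← ZMod.natCast_eq_zero_iff] at hndvd
    simpa using hndvd
  · have hcast : (y : ZMod n) = z := by simpa using hyz
    rw [ZMod.natCast_eq_natCast_iff] at hcast
    exact hcast.eq_of_lt_of_lt ((mem_range.1 hy).trans_le (n.sub_le 1))
      ((mem_range.1 hz).trans_le (n.sub_le 1))
  · obtain ⟨w, hw⟩ : ∃ w : ZMod n, w = ↑u⁻¹ * z := ⟨_, rfl⟩
    have hw_pos : 0 < w.val := by simpa [ZMod.val_pos, hw] using hz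
    have hw_lt : w.val < n := w.val_lt
    refine ⟨w.val - 1, mem_range.2 (by omega), ?_⟩
    have hcast : ((w.val - 1 : ℕ) : ZMod n) + 1 = w := by
      rw [← Nat.cast_add_one, Nat.sub_add_cancel hw_pos, ZMod.natCast_zmod_val]
    beta_reduce
    rw [hcast, hw, Units.mul_inv_cancel_left]

theorem card_sum_mul_eq_card_nonzeroSummands {h : ℕ} (u : Fin h → (ZMod n)ˣ) (c : ZMod n) :
    #{y ∈ Fintype.piFinset fun _ : Fin h ↦ range (n - 1) | ∑ i, (u i : ZMod n) * y i = c} =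
      #(nonzeroSummands h (c + ∑ i, (u i : ZMod n))) := by
  have hbij (i : Fin h) := bijOn_unit_mul_natCast_add_one (u i)
  refine card_nbij (fun y i ↦ (u i : ZMod n) * (y i + 1)) ?_ ?_ ?_
  · intro y hy
    obtain ⟨hy_range, rfl⟩ := mem_filter.1 hy
    refine mem_nonzeroSummands.2
      ⟨fun i ↦ (hbij i).mapsTo (Fintype.mem_piFinset.1 hy_range i), ?_⟩
    simp only [mul_add, mul_one, sum_add_distrib]
  · intro y hy z hz hyz
    have hy_range := Fintype.mem_piFinset.1 (mem_filter.1 hy).1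
    have hz_range := Fintype.mem_piFinset.1 (mem_filter.1 hz).1
    exact funext fun i ↦ (hbij i).injOn (hy_range i) (hz_range i) (congrFun hyz i)
  · intro z hz
    obtain ⟨hz_ne, hz_sum⟩ := mem_nonzeroSummands.1 hz
    choose y hy_range hyz using fun i ↦ (hbij i).surjOn (hz_ne i)
    refine ⟨y, mem_filter.2 ⟨Fintype.mem_piFinset.2 hy_range, ?_⟩, funext hyz⟩
    simpa only [← hyz, mul_add, mul_one, sum_add_distrib, add_left_inj] using hz_sum

theorem card_sum_mul_modEq_eq_card_nonzeroSummands {h : ℕ} {a : Fin h → ℤ}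
    (ha : ∀ i, IsCoprime (a i) n) (b : ℤ) :
    #{y ∈ Fintype.piFinset fun _ : Fin h ↦ range (n - 1) | ∑ i, a i * (y i : ℤ) ≡ b [ZMOD n]} =
      #(nonzeroSummands h ((b + ∑ i, a i : ℤ) : ZMod n)) := by
  choose u hu using fun i ↦ (ZMod.coe_int_isUnit_iff_isCoprime (a i) n).2 (ha i).symm
  have hcount := card_sum_mul_eq_card_nonzeroSummands u b
  simp only [hu] at hcount
  simpa [← ZMod.intCast_eq_intCast_iff] using hcount

end LinearCongruence

/-- Item (iii) of the counting lemma: the number `δ` of solutions of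
`a₁y₁ + ⋯ + a_h y_h ≡ b (mod α)` with `yᵢ ∈ {0, …, α−2}` equals
`((α−1)^h − (−1)^h)/α + (−1)^h` if `a₁ + ⋯ + a_h ≡ −b (mod α)`, and
`((α−1)^h − (−1)^h)/α` otherwise. -/
theorem stmt_2 (h α : ℕ) (hh : 1 ≤ h) (hα : 2 ≤ α)
    (a : Fin h → ℤ) (ha : ∀ i, IsCoprime (a i) (α : ℤ))
    (b : ℕ) (hb : b < α)
    (δ : ℕ)
    (hδ : δ = (Finset.filter
        (fun y : Fin h → ℕ => (∑ i, a i * (y i : ℤ)) ≡ (b : ℤ) [ZMOD (α : ℤ)])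
        (Fintype.piFinset fun _ : Fin h => Finset.range (α - 1))).card) :
    ((∑ i, a i) ≡ -(b : ℤ) [ZMOD (α : ℤ)] →
      (δ : ℤ) = (((α : ℤ) - 1) ^ h - (-1) ^ h) / α + (-1) ^ h) ∧
    (¬ (∑ i, a i) ≡ -(b : ℤ) [ZMOD (α : ℤ)] →
      (δ : ℤ) = (((α : ℤ) - 1) ^ h - (-1) ^ h) / α) := by
  have : NeZero α := ⟨by omega⟩
  have hcount : δ = #(nonzeroSummands h ((b + ∑ i, a i : ℤ) : ZMod α)) :=
    hδ.trans (card_sum_mul_modEq_eq_card_nonzeroSummands ha b)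
  have hzero : ((b + ∑ i, a i : ℤ) : ZMod α) = 0 ↔ ∑ i, a i ≡ -(b : ℤ) [ZMOD α] := by
    rw [← ZMod.intCast_eq_intCast_iff, Int.cast_neg, ← add_eq_zero_iff_eq_neg', Int.cast_add]
  have hmul := card_mul_card_nonzeroSummands_sub h ((b + ∑ i, a i : ℤ) : ZMod α)
  rw [ZMod.card, ← hcount, if_congr hzero rfl rfl] at hmul
  have hquot := Int.ediv_eq_of_eq_mul_right (NeZero.ne (α : ℤ)) hmul.symm
  constructor <;> intro hs
  · rw [hquot, if_pos hs, sub_add_cancel]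
  · rw [hquot, if_neg hs, sub_zero]
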